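/- arXiv:0909.1599 — 7 statements merged into one kernel-verified Lean document; each statement's English description precedes it below -/
import Mathlib

section
/- Let N be a positive integer, M = N+1, and let Φ = {φ_k}_{k=1}^{M} ⊂ ℝ^N be the real harmonic tight frame of M vectors in ℝ^N. Then every unit-norm tight frame Ψ = {ψ_k}_{k=1}^{M} of M vectors in ℝ^N can be written as ψ_k = δ(k) U φ_{σ(k)} for k = 1,2,...,M, where δ(k) = ±1 is some sign function in k, U is some orthogonal N×N matrix, and σ is some permutation on the index set {1,2,...,M}. -/
/-- The real harmonic tight frame of `M` vectors in `ℝ^N` (0-based indexing: `htf N M k`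
is the vector `φ_{k+1}` of the paper, for `k = 0, …, M-1`). -/
noncomputable def htf (N M : ℕ) (k : Fin M) (i : Fin N) : ℝ :=
  if N % 2 = 0 then
    if (i : ℕ) < N / 2 then
      Real.sqrt (2 / N) * Real.cos (((2 * (i : ℕ) + 1 : ℕ) : ℝ) * (k : ℕ) * Real.pi / M)
    else
      Real.sqrt (2 / N) *
        Real.sin (((2 * ((i : ℕ) - N / 2) + 1 : ℕ) : ℝ) * (k : ℕ) * Real.pi / M)
  else
    if (i : ℕ) = 0 then Real.sqrt (2 / N) * (1 / Real.sqrt 2)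
    else if (i : ℕ) ≤ (N - 1) / 2 then
      Real.sqrt (2 / N) * Real.cos (((2 * (i : ℕ) : ℕ) : ℝ) * (k : ℕ) * Real.pi / M)
    else
      Real.sqrt (2 / N) *
        Real.sin (((2 * ((i : ℕ) - (N - 1) / 2) : ℕ) : ℝ) * (k : ℕ) * Real.pi / M)

open Finset in
lemma dir_odd (θ : ℝ) (n : ℕ) :
    Real.sin θ * ∑ i ∈ range n, 2 * Real.cos ((2 * i + 1 : ℝ) * θ) = Real.sin (2 * n * θ) := by
  induction n with
  | zero => simp
  | succ n ih =>
    rw [sum_range_succ, mul_add, ih]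
    have e1 : 2 * (n : ℝ) * θ = (2 * n + 1) * θ - θ := by ring
    have e2 : 2 * ((n + 1 : ℕ) : ℝ) * θ = (2 * n + 1) * θ + θ := by push_cast; ring
    rw [e1, e2, Real.sin_sub, Real.sin_add]; ring

open Finset in
lemma dir_even (θ : ℝ) (n : ℕ) :
    Real.sin θ * (1 + ∑ i ∈ range n, 2 * Real.cos ((2 * (i + 1) : ℝ) * θ))
      = Real.sin ((2 * n + 1) * θ) := by
  induction n with
  | zero => simp
  | succ n ih =>
    rw [sum_range_succ, ← add_assoc, mul_add, ih]
    have e1 : (2 * (n : ℝ) + 1) * θ = (2 * (n + 1)) * θ - θ := by ring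
    have e2 : (2 * ((n + 1 : ℕ) : ℝ) + 1) * θ = (2 * (n + 1)) * θ + θ := by push_cast; ring
    rw [e1, e2, Real.sin_sub, Real.sin_add]; ring

open Finset in
lemma gram_even (n M : ℕ) (hn : 0 < n) (k l : Fin M) :
    ((2 * n : ℕ) : ℝ) * ∑ i, htf (2 * n) M k i * htf (2 * n) M l i
      = ∑ i ∈ range n, 2 * Real.cos ((2 * i + 1 : ℝ) * (((k : ℕ) - (l : ℕ) : ℝ) * Real.pi / M)) := by
  have hs : Real.sqrt (2 / ((2 * n : ℕ) : ℝ)) ^ 2 = 2 / ((2 * n : ℕ) : ℝ) :=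
    Real.sq_sqrt (by positivity)
  have hn' : (n : ℝ) ≠ 0 := by positivity
  unfold htf
  set s := Real.sqrt (2 / ((2 * n : ℕ) : ℝ))
  have h0 : 2 * n % 2 = 0 := by omega
  have h1 : 2 * n / 2 = n := by omega
  simp only [h0, if_true, h1]
  rw [Fin.sum_univ_eq_sum_range (fun i : ℕ =>
    (if i < n then s * Real.cos (((2 * i + 1 : ℕ) : ℝ) * (k : ℕ) * Real.pi / M)
      else s * Real.sin (((2 * (i - n) + 1 : ℕ) : ℝ) * (k : ℕ) * Real.pi / M)) *
    (if i < n then s * Real.cos (((2 * i + 1 : ℕ) : ℝ) * (l : ℕ) * Real.pi / M)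
      else s * Real.sin (((2 * (i - n) + 1 : ℕ) : ℝ) * (l : ℕ) * Real.pi / M))) (2 * n),
    two_mul n, sum_range_add, ← sum_add_distrib, mul_sum]
  refine sum_congr rfl fun i hi => ?_
  have hi' : i < n := mem_range.1 hi
  simp only [hi', if_true, show ¬ (n + i < n) by omega, if_false, show n + i - n = i by omega]
  have e : (2 * i + 1 : ℝ) * (((k : ℕ) - (l : ℕ) : ℝ) * Real.pi / M)
    = ((2 * i + 1 : ℕ) : ℝ) * (k : ℕ) * Real.pi / M - ((2 * i + 1 : ℕ) : ℝ) * (l : ℕ) * Real.pi / M := by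
    push_cast; ring
  rw [e, Real.cos_sub]
  have hs2 : ((n + n : ℕ) : ℝ) * s ^ 2 = 2 := by
    rw [hs]; push_cast; field_simp; norm_num
  linear_combination (Real.cos (((2 * i + 1 : ℕ) : ℝ) * (k : ℕ) * Real.pi / M) *
    Real.cos (((2 * i + 1 : ℕ) : ℝ) * (l : ℕ) * Real.pi / M) +
    Real.sin (((2 * i + 1 : ℕ) : ℝ) * (k : ℕ) * Real.pi / M) *
    Real.sin (((2 * i + 1 : ℕ) : ℝ) * (l : ℕ) * Real.pi / M)) * hs2

open Finset in
lemma gram_odd (n M : ℕ) (k l : Fin M) :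
    ((2 * n + 1 : ℕ) : ℝ) * ∑ i, htf (2 * n + 1) M k i * htf (2 * n + 1) M l i
      = 1 + ∑ i ∈ range n, 2 * Real.cos ((2 * (i + 1) : ℝ) * (((k : ℕ) - (l : ℕ) : ℝ) * Real.pi / M)) := by
  have hs : Real.sqrt (2 / ((2 * n + 1 : ℕ) : ℝ)) ^ 2 = 2 / ((2 * n + 1 : ℕ) : ℝ) :=
    Real.sq_sqrt (by positivity)
  have hn' : ((2 * n + 1 : ℕ) : ℝ) ≠ 0 := by positivity
  have h2 : (1 / Real.sqrt 2) ^ 2 = 1 / 2 := by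
    rw [div_pow, Real.sq_sqrt (by norm_num)]; norm_num
  unfold htf
  set s := Real.sqrt (2 / ((2 * n + 1 : ℕ) : ℝ))
  set r := 1 / Real.sqrt 2
  have hs2 : ((2 * n + 1 : ℕ) : ℝ) * s ^ 2 = 2 := by
    rw [hs]; field_simp
  have h0 : ¬ ((2 * n + 1) % 2 = 0) := by omega
  have h1 : (2 * n + 1 - 1) / 2 = n := by omega
  simp only [h0, if_false, h1]
  rw [Fin.sum_univ_eq_sum_range (fun i : ℕ =>
    (if i = 0 then s * r else if i ≤ n then s * Real.cos (((2 * i : ℕ) : ℝ) * (k : ℕ) * Real.pi / M)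
      else s * Real.sin (((2 * (i - n) : ℕ) : ℝ) * (k : ℕ) * Real.pi / M)) *
    (if i = 0 then s * r else if i ≤ n then s * Real.cos (((2 * i : ℕ) : ℝ) * (l : ℕ) * Real.pi / M)
      else s * Real.sin (((2 * (i - n) : ℕ) : ℝ) * (l : ℕ) * Real.pi / M))) (2 * n + 1),
    sum_range_succ', two_mul n, sum_range_add, ← sum_add_distrib, ← two_mul, mul_add, mul_sum, add_comm]
  congr 1
  · simp only [if_true]
    linear_combination r ^ 2 * hs2 + 2 * h2
  refine sum_congr rfl fun i hi => ?_
  have hi' : i < n := mem_range.1 hi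
  simp only [show i + 1 ≠ 0 by omega, show n + i + 1 ≠ 0 by omega, show i + 1 ≤ n by omega, if_true,
    show ¬ (n + i + 1 ≤ n) by omega, if_false, show n + i + 1 - n = i + 1 by omega]
  have e : (2 * (i + 1) : ℝ) * (((k : ℕ) - (l : ℕ) : ℝ) * Real.pi / M)
    = ((2 * (i + 1) : ℕ) : ℝ) * (k : ℕ) * Real.pi / M - ((2 * (i + 1) : ℕ) : ℝ) * (l : ℕ) * Real.pi / M := by
    push_cast; ring
  rw [e, Real.cos_sub]
  linear_combination (Real.cos (((2 * (i + 1) : ℕ) : ℝ) * (k : ℕ) * Real.pi / M) *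
    Real.cos (((2 * (i + 1) : ℕ) : ℝ) * (l : ℕ) * Real.pi / M) +
    Real.sin (((2 * (i + 1) : ℕ) : ℝ) * (k : ℕ) * Real.pi / M) *
    Real.sin (((2 * (i + 1) : ℕ) : ℝ) * (l : ℕ) * Real.pi / M)) * hs2

lemma sin_N (N : ℕ) (k l : ℕ) :
    Real.sin (N * (((k : ℝ) - l) * Real.pi / ((N + 1 : ℕ) : ℝ)))
      = - ((-1) ^ k * (-1) ^ l) * Real.sin (((k : ℝ) - l) * Real.pi / ((N + 1 : ℕ) : ℝ)) := by
  have e : N * (((k : ℝ) - l) * Real.pi / ((N + 1 : ℕ) : ℝ))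
      = (k * Real.pi - l * Real.pi) - ((k : ℝ) - l) * Real.pi / ((N + 1 : ℕ) : ℝ) := by
    have : ((N + 1 : ℕ) : ℝ) ≠ 0 := by positivity
    field_simp; push_cast; ring
  rw [e, Real.sin_sub, Real.sin_sub, Real.cos_sub]
  simp only [Real.sin_nat_mul_pi, Real.cos_nat_mul_pi]
  ring

lemma htf_gram (N : ℕ) (hN : 1 ≤ N) (k l : Fin (N + 1)) :
    (N : ℝ) * ∑ i, htf N (N + 1) k i * htf N (N + 1) l i
      = (-1) ^ (k : ℕ) * (-1) ^ (l : ℕ) * (((N : ℝ) + 1) * (if k = l then 1 else 0) - 1) := by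
  by_cases hkl : k = l
  · subst hkl
    have hsq : ((-1 : ℝ)) ^ (k : ℕ) * (-1) ^ (k : ℕ) = 1 := by
      rw [← mul_pow]; norm_num
    rw [hsq]
    rcases Nat.even_or_odd' N with ⟨n, rfl | rfl⟩
    · rw [gram_even n _ (by omega)]; simp; ring
    · rw [gram_odd n]; simp; ring
  · rw [if_neg hkl]
    set θ : ℝ := (((k : ℕ) : ℝ) - ((l : ℕ) : ℝ)) * Real.pi / ((N + 1 : ℕ) : ℝ) with hθ
    have hne : Real.sin θ ≠ 0 := by
      have hk := k.2
      have hl := l.2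
      have hpos : (0 : ℝ) < ((N + 1 : ℕ) : ℝ) := by positivity
      have hk' : ((k : ℕ) : ℝ) < ((N + 1 : ℕ) : ℝ) := by exact_mod_cast hk
      have hl' : ((l : ℕ) : ℝ) < ((N + 1 : ℕ) : ℝ) := by exact_mod_cast hl
      have hk0 : (0 : ℝ) ≤ ((k : ℕ) : ℝ) := by positivity
      have hl0 : (0 : ℝ) ≤ ((l : ℕ) : ℝ) := by positivity
      have hpi := Real.pi_pos
      have hd : ((k : ℕ) : ℝ) - ((l : ℕ) : ℝ) ≠ 0 := by
        rw [sub_ne_zero]; intro h; exact hkl (Fin.ext (by exact_mod_cast h))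
      intro h
      have h3 := (Real.sin_eq_zero_iff_of_lt_of_lt (x := θ) (by
        rw [hθ, lt_div_iff₀ hpos]; nlinarith) (by
        rw [hθ, div_lt_iff₀ hpos]; nlinarith)).1 h
      rw [hθ, div_eq_zero_iff] at h3
      rcases h3 with h3 | h3
      · rcases mul_eq_zero.1 h3 with h3 | h3
        · exact hd h3
        · exact hpi.ne' h3
      · exact hpos.ne' h3
    apply mul_left_cancel₀ hne
    have key : Real.sin θ * ((N : ℝ) * ∑ i, htf N (N + 1) k i * htf N (N + 1) l i)
        = Real.sin (N * θ) := by
      clear_value θ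
      rcases Nat.even_or_odd' N with ⟨n, rfl | rfl⟩
      · rw [gram_even n _ (by omega), ← hθ, dir_odd]; push_cast; rfl
      · rw [gram_odd n, ← hθ, dir_even]; push_cast; rfl
    rw [key, hθ, sin_N]; ring

lemma untf_gram {N : ℕ} (hN : 1 ≤ N) (F : Matrix (Fin (N + 1)) (Fin N) ℝ)
    (hF : F.transpose * F = (((N : ℝ) + 1) / N) • 1)
    (hnorm : ∀ k, ∑ i, F k i ^ 2 = 1) :
    ∃ ε : Fin (N + 1) → ℝ, (∀ k, ε k = 1 ∨ ε k = -1) ∧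
      ∀ k l, (N : ℝ) * ∑ i, F k i * F l i
        = ε k * ε l * (((N : ℝ) + 1) * (if k = l then 1 else 0) - 1) := by
  have hN0 : (0 : ℝ) < N := by exact_mod_cast hN
  obtain ⟨w, hw0, hw⟩ : ∃ w : Fin (N + 1) → ℝ, w ≠ 0 ∧ F.transpose.mulVec w = 0 := by
    have h := LinearMap.ker_ne_bot_of_finrank_lt (f := F.transpose.mulVecLin) (by simp)
    obtain ⟨w, hw, hw0⟩ := Submodule.exists_mem_ne_zero_of_ne_bot h
    exact ⟨w, hw0, by simpa only [LinearMap.mem_ker, Matrix.mulVecLin_apply] using hw⟩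
  have hww : 0 < ∑ k, w k ^ 2 := by
    obtain ⟨k, hk⟩ := Function.ne_iff.1 hw0
    exact Finset.sum_pos' (fun _ _ => sq_nonneg _) ⟨k, Finset.mem_univ _, by
      have : w k ≠ 0 := hk
      positivity⟩
  set S := ∑ k, w k ^ 2 with hS
  have hwk : ∀ i, ∑ k, F k i * w k = 0 := fun i => by
    have := congrFun hw i
    simpa [Matrix.mulVec, dotProduct] using this
  have hFij : ∀ i j, ∑ k, F k i * F k j = ((N : ℝ) + 1) / N * (if i = j then 1 else 0) := by
    intro i j
    have := congrFun (congrFun hF i) j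
    simpa [Matrix.mul_apply, Matrix.one_apply] using this
  let A : Matrix (Fin N ⊕ Unit) (Fin (N + 1)) ℝ := Matrix.of fun i k =>
    Sum.elim (fun i => (N : ℝ) / (N + 1) * F k i) (fun _ => w k / S) i
  let B : Matrix (Fin (N + 1)) (Fin N ⊕ Unit) ℝ := Matrix.of fun k i =>
    Sum.elim (fun i => F k i) (fun _ => w k) i
  have hAB : A * B = 1 := by
    ext i j
    rcases i with i | i <;> rcases j with j | j <;>
      simp only [Matrix.mul_apply, A, B, Matrix.of_apply, Sum.elim_inl, Sum.elim_inr, Matrix.one_apply]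
    · simp only [mul_assoc, ← Finset.mul_sum, hFij]
      simp only [Sum.inl.injEq]
      field_simp
    · simp only [mul_assoc, ← Finset.mul_sum, hwk]; simp
    · simp only [div_mul_eq_mul_div, ← Finset.sum_div, mul_comm (w _), hwk]; simp
    · simp only [div_mul_eq_mul_div, ← Finset.sum_div, ← pow_two, ← hS]
      simp [hww.ne']
  have hBA : B * A = 1 := (Matrix.mul_eq_one_comm_of_card_eq _ _ _ (by simp)).1 hAB
  have hkl : ∀ k l, (N : ℝ) / (N + 1) * ∑ i, F k i * F l i + w k * w l / S
      = if k = l then 1 else 0 := by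
    intro k l
    have := congrFun (congrFun hBA k) l
    simp only [Matrix.mul_apply, A, B, Matrix.of_apply, Fintype.sum_sum_type, Sum.elim_inl, Sum.elim_inr,
      Matrix.one_apply] at this
    rw [← this, Finset.mul_sum]
    simp [mul_div_assoc, mul_left_comm]
  set c := Real.sqrt (((N : ℝ) + 1) / S) with hc
  have hc2 : c ^ 2 = ((N : ℝ) + 1) / S := Real.sq_sqrt (by positivity)
  refine ⟨fun k => c * w k, fun k => ?_, fun k l => ?_⟩
  · have h := hkl k k
    simp only [← pow_two, hnorm, if_true] at h
    rw [← sq_eq_one_iff, mul_pow, hc2]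
    field_simp at h ⊢
    linarith
  · have h := hkl k l
    have e : c * w k * (c * w l) = ((N : ℝ) + 1) * (w k * w l / S) := by
      linear_combination w k * w l * hc2
    have h1 : (N : ℝ) * ∑ i, F k i * F l i
      = ((N : ℝ) + 1) * ((if k = l then 1 else 0) - w k * w l / S) := by
      rw [← h]; field_simp; ring
    rw [h1, e]
    by_cases hh : k = l
    · subst hh
      have h2 := hkl k k
      simp only [← pow_two, hnorm, if_true] at h2
      have h3 : w k * w k / S = 1 / ((N : ℝ) + 1) := by
        rw [← pow_two];
        have : (N : ℝ) / (N + 1) = 1 - 1 / ((N : ℝ) + 1) := by field_simp; ring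
        linarith
      rw [h3, if_pos rfl]; field_simp
    · simp only [hh, if_false]; ring


/-- Let `M = N + 1` and let `htf N M` be the real harmonic tight frame of `M` vectors in
`ℝ^N`.  Every unit-norm tight frame `Ψ = {ψ_k}` of `M` vectors in `ℝ^N` can be written as
`ψ_k = δ(k) U φ_{σ(k)}` for a sign function `δ`, an orthogonal matrix `U`, and a
permutation `σ` of the index set. -/
theorem stmt0 {N : ℕ} (hN : 1 ≤ N) (M : ℕ) (hM : M = N + 1)
    (Ψ : Fin M → Fin N → ℝ)
    (hnorm : ∀ k : Fin M, ∑ i : Fin N, Ψ k i ^ 2 = 1)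
    (htight : ∀ i j : Fin N,
      ∑ k : Fin M, Ψ k i * Ψ k j = ((M : ℝ) / N) * (if i = j then 1 else 0)) :
    ∃ (δ : Fin M → ℝ) (U : Matrix (Fin N) (Fin N) ℝ) (σ : Equiv.Perm (Fin M)),
      (∀ k, δ k = 1 ∨ δ k = -1) ∧
      U.transpose * U = 1 ∧
      (∀ (k : Fin M) (i : Fin N), Ψ k i = δ k * ∑ j : Fin N, U i j * htf N M (σ k) j) := by
  subst hM
  have hN0 : (0 : ℝ) < N := by exact_mod_cast hN
  have hF : (Matrix.of Ψ).transpose * (Matrix.of Ψ) = (((N : ℝ) + 1) / N) • 1 := by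
    ext i j
    simpa [Matrix.mul_apply, Matrix.one_apply] using htight i j
  obtain ⟨ε, hε, hG⟩ := untf_gram hN (Matrix.of Ψ) hF hnorm
  simp only [Matrix.of_apply] at hG
  have hδ : ∀ k : Fin (N + 1), ε k * (-1) ^ (k : ℕ) = 1 ∨ ε k * (-1) ^ (k : ℕ) = -1 := by
    intro k
    rcases hε k with h | h <;> rcases neg_one_pow_eq_or ℝ (k : ℕ) with h' | h' <;>
      rw [h, h'] <;> norm_num
  set δ : Fin (N + 1) → ℝ := fun k => ε k * (-1) ^ (k : ℕ) with hδdef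
  have hGG : ∀ k l, δ k * δ l * ∑ i, htf N (N + 1) k i * htf N (N + 1) l i
      = ∑ i, Ψ k i * Ψ l i := by
    intro k l
    apply mul_left_cancel₀ hN0.ne'
    rw [hG, mul_left_comm, htf_gram N hN k l]
    have h1 : ((-1 : ℝ)) ^ (k : ℕ) * (-1) ^ (k : ℕ) = 1 := by rw [← mul_pow]; norm_num
    have h2 : ((-1 : ℝ)) ^ (l : ℕ) * (-1) ^ (l : ℕ) = 1 := by rw [← mul_pow]; norm_num
    simp only [hδdef]
    linear_combination (ε k * ε l * (((N : ℝ) + 1) * (if k = l then 1 else 0) - 1)) *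
      ((-1) ^ (l : ℕ) * (-1) ^ (l : ℕ) * h1 + h2)
  let P : Matrix (Fin (N + 1)) (Fin N) ℝ := Matrix.of Ψ
  let Q : Matrix (Fin (N + 1)) (Fin N) ℝ := Matrix.of fun k i => δ k * htf N (N + 1) k i
  have hQP : Q * Q.transpose = P * P.transpose := by
    ext k l
    simp only [Matrix.mul_apply, Matrix.transpose_apply, P, Q, Matrix.of_apply]
    rw [← hGG, Finset.mul_sum]
    exact Finset.sum_congr rfl fun _ _ => by ring
  have hPP : P.transpose * P = (((N : ℝ) + 1) / N) • 1 := hF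
  have hc : ((N : ℝ) / (N + 1)) * (((N : ℝ) + 1) / N) = 1 := by field_simp
  let U : Matrix (Fin N) (Fin N) ℝ := ((N : ℝ) / (N + 1)) • (P.transpose * Q)
  have hUQ : U * Q.transpose = P.transpose := by
    simp only [U, Matrix.smul_mul]
    rw [Matrix.mul_assoc, hQP, ← Matrix.mul_assoc, hPP, Matrix.smul_mul, smul_smul, hc]
    simp
  have hUU : U * U.transpose = 1 := by
    have : U.transpose = ((N : ℝ) / (N + 1)) • (Q.transpose * P) := by
      simp [U, Matrix.transpose_mul]
    rw [this, Matrix.mul_smul, ← Matrix.mul_assoc, hUQ, hPP, smul_smul, hc, one_smul]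
  refine ⟨δ, U, Equiv.refl _, hδ, mul_eq_one_comm.1 hUU, fun k i => ?_⟩
  have := congrFun (congrFun hUQ i) k
  simp only [Matrix.mul_apply, Matrix.transpose_apply, P, Q, Matrix.of_apply] at this
  rw [← this, Finset.mul_sum]
  exact Finset.sum_congr rfl fun _ _ => by simp only [Equiv.refl_apply]; ring
end

section
/- Let N ≥ 1 and M = N+1, and let {ψ_k}_{k=1}^M be a modulated harmonic tight frame of M vectors in ℝ^N. Then {ψ_k} is a zero-sum frame; that is, for each coordinate ℓ ∈ {1,...,N}, the sum over k = 1,...,M of the ℓ-th component of ψ_k equals zero (equivalently, each column of the analysis frame operator F sums to zero). -/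
theorem aux_sum (a M : ℕ) (h : a < M) (hp : Even (a + M)) :
    ∑ k : Fin M, ((-1 : ℂ) * Complex.exp (((a * Real.pi / M : ℝ) : ℂ) * Complex.I)) ^ (k : ℕ) = 0 := by
  have hM : (0 : ℝ) < M := by exact_mod_cast (by omega : 0 < M)
  rw [Fin.sum_univ_eq_sum_range
    (fun k => ((-1 : ℂ) * Complex.exp (((a * Real.pi / M : ℝ) : ℂ) * Complex.I)) ^ k)]
  have h1 : (-1 : ℂ) * Complex.exp (((a * Real.pi / M : ℝ) : ℂ) * Complex.I) ≠ 1 := by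
    intro h1
    have h2 := congrArg Complex.re h1
    rw [neg_one_mul, Complex.neg_re, Complex.exp_ofReal_mul_I_re, Complex.one_re] at h2
    have h3 : (a : ℝ) * Real.pi / M < Real.pi := by
      rw [div_lt_iff₀ hM, mul_comm]
      exact mul_lt_mul_of_pos_left (by exact_mod_cast h) Real.pi_pos
    have h4 := Real.cos_lt_cos_of_nonneg_of_le_pi
      (by positivity : 0 ≤ (a : ℝ) * Real.pi / M) le_rfl h3
    rw [Real.cos_pi] at h4
    linarith
  rw [geom_sum_eq h1, mul_pow, ← Complex.exp_nat_mul]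
  have h5 : (M : ℂ) * (((a * Real.pi / M : ℝ) : ℂ) * Complex.I) = a * (Real.pi * Complex.I) := by
    have : (M : ℂ) ≠ 0 := by exact_mod_cast hM.ne'
    push_cast
    field_simp
  rw [h5, Complex.exp_nat_mul, Complex.exp_pi_mul_I, ← pow_add, add_comm, hp.neg_one_pow]
  simp

theorem aux_term (a M k : ℕ) :
    ((-1 : ℂ) * Complex.exp (((a * Real.pi / M : ℝ) : ℂ) * Complex.I)) ^ k
      = (((-1 : ℝ) ^ k : ℝ) : ℂ) * Complex.exp (((a * k * Real.pi / M : ℝ) : ℂ) * Complex.I) := by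
  rw [mul_pow, ← Complex.exp_nat_mul]
  push_cast
  congr 2
  ring

theorem aux_cos (a M : ℕ) (h : a < M) (hp : Even (a + M)) :
    ∑ k : Fin M, (-1 : ℝ) ^ (k : ℕ) * Real.cos ((a : ℝ) * (k : ℕ) * Real.pi / M) = 0 := by
  have := congrArg Complex.re (aux_sum a M h hp)
  simp_rw [aux_term] at this
  rw [Complex.re_sum] at this
  simpa only [Complex.re_ofReal_mul, Complex.exp_ofReal_mul_I_re, Complex.zero_re] using this

theorem aux_sin (a M : ℕ) (h : a < M) (hp : Even (a + M)) :
    ∑ k : Fin M, (-1 : ℝ) ^ (k : ℕ) * Real.sin ((a : ℝ) * (k : ℕ) * Real.pi / M) = 0 := by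
  have := congrArg Complex.im (aux_sum a M h hp)
  simp_rw [aux_term] at this
  rw [Complex.im_sum] at this
  simpa only [Complex.im_ofReal_mul, Complex.exp_ofReal_mul_I_im, Complex.zero_im] using this

theorem aux_fin (M : ℕ) (c γ : ℝ) (f : Fin M → ℝ)
    (h : ∑ k : Fin M, (-1 : ℝ) ^ (k : ℕ) * f k = 0) :
    ∑ k : Fin M, γ * (-1 : ℝ) ^ ((k : ℕ) + 1) * (c * f k) = 0 := by
  have : ∀ k : Fin M, γ * (-1 : ℝ) ^ ((k : ℕ) + 1) * (c * f k)
      = (-γ * c) * ((-1 : ℝ) ^ (k : ℕ) * f k) := fun k => by ring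
  simp_rw [this]
  rw [← Finset.mul_sum, h, mul_zero]

/-- For `M = N + 1`, a modulated harmonic tight frame `ψ_k = γ(-1)^k φ_k` (with fixed sign
`γ = ±1`; here `htf N M k = φ_{k+1}`, so `ψ_{k+1} = γ(-1)^{k+1} htf N M k`) is a zero-sum
frame: each column of its analysis frame operator sums to zero. -/
theorem stmt2 {N : ℕ} (hN : 1 ≤ N) (M : ℕ) (hM : M = N + 1)
    (γ : ℝ) (hγ : γ = 1 ∨ γ = -1) :
    ∀ i : Fin N, ∑ k : Fin M, γ * (-1 : ℝ) ^ ((k : ℕ) + 1) * htf N M k i = 0 := by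
  intro i
  have hi := i.isLt
  unfold htf
  split_ifs with h1 h2 h2 h3
  · exact aux_fin M _ γ _ (aux_cos _ M (by omega) (by rw [Nat.even_iff]; omega))
  · exact aux_fin M _ γ _ (aux_sin _ M (by omega) (by rw [Nat.even_iff]; omega))
  · have h0 := aux_cos 0 M (by omega) (by rw [Nat.even_iff]; omega)
    have h4 := aux_fin M (Real.sqrt (2 / N) * (1 / Real.sqrt 2)) γ _ h0
    simpa using h4
  · exact aux_fin M _ γ _ (aux_cos _ M (by omega) (by rw [Nat.even_iff]; omega))
  · exact aux_fin M _ γ _ (aux_sin _ M (by omega) (by rw [Nat.even_iff]; omega))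
end

section
/- Let F ∈ ℝ^{M×N} be a frame analysis operator and R ∈ ℝ^{N×M}. Suppose A = FR = aI_M + J for some a ≥ 0 and some column-constant matrix J ∈ 𝒥. Then for every composition m of M, every Variant I initial codeword ŷ_init compatible with m, and every x ∈ ℝ^N with Variant I FPQ encoding P (a permutation matrix such that PFx is m-descending), the linear reconstruction x̂ = R P^{−1} ŷ_init is consistent; that is, D(m) P F x̂ ≥ 0 elementwise. -/
/-- A matrix is *column-constant* when each of its columns is a constant vector. -/
def ColConst {M : ℕ} (J : Matrix (Fin M) (Fin M) ℝ) : Prop :=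
  ∀ i i' j, J i j = J i' j

/-- `D(m) z ≥ 0` elementwise: for every pair of consecutive blocks of the composition `m`,
every entry of `z` in the earlier block dominates every entry in the later block
(i.e. `z` is `m`-descending). -/
def DescIneq {M : ℕ} (c : Composition M) (z : Fin M → ℝ) : Prop :=
  ∀ k ℓ : Fin M, (c.index k : ℕ) + 1 = (c.index ℓ : ℕ) → z ℓ ≤ z k

/-- A Variant I initial codeword compatible with the composition `m`: constant on each block
of `m`, with strictly decreasing values `μ_1 > μ_2 > ⋯ > μ_K` across the blocks. -/
def VarICodeword {M : ℕ} (c : Composition M) (y : Fin M → ℝ) : Prop :=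
  (∀ k ℓ : Fin M, c.index k = c.index ℓ → y k = y ℓ) ∧
  (∀ k ℓ : Fin M, (c.index k : ℕ) < (c.index ℓ : ℕ) → y ℓ < y k)

open Matrix in
/-- If `A = FR = aI_M + J` with `a ≥ 0` and `J` column-constant, then for every composition `m`
of `M`, every Variant I initial codeword compatible with `m`, and every `x` with Variant I FPQ
encoding `P` (a permutation matrix such that `PFx` is `m`-descending), the linear reconstruction
`x̂ = R P⁻¹ ŷ_init` is consistent: `D(m) P F x̂ ≥ 0` elementwise. -/
theorem stmt3 {M N : ℕ} (F : Matrix (Fin M) (Fin N) ℝ) (R : Matrix (Fin N) (Fin M) ℝ)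
    (hF : F.rank = N) (a : ℝ) (ha : 0 ≤ a) (J : Matrix (Fin M) (Fin M) ℝ) (hJ : ColConst J)
    (hA : F * R = a • (1 : Matrix (Fin M) (Fin M) ℝ) + J)
    (c : Composition M) (y : Fin M → ℝ) (hy : VarICodeword c y)
    (x : Fin N → ℝ) (σ : Equiv.Perm (Fin M))
    (henc : DescIneq c ((σ.permMatrix ℝ) *ᵥ (F *ᵥ x))) :
    DescIneq c ((σ.permMatrix ℝ) *ᵥ (F *ᵥ (R *ᵥ (((σ⁻¹).permMatrix ℝ) *ᵥ y)))) := by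
  intro k l hkl
  have hlt : y l < y k := hy.2 k l (by omega)
  have key : ∀ i, ((σ.permMatrix ℝ) *ᵥ (F *ᵥ (R *ᵥ (((σ⁻¹).permMatrix ℝ) *ᵥ y)))) i
      = a * y i + (J *ᵥ (((σ⁻¹).permMatrix ℝ) *ᵥ y)) (σ i) := by
    intro i
    rw [Matrix.mulVec_mulVec (M := F), hA, Matrix.add_mulVec, Matrix.smul_mulVec,
      Matrix.one_mulVec, Matrix.permMatrix_mulVec]
    simp [Matrix.permMatrix_mulVec]
  have hc : (J *ᵥ (((σ⁻¹).permMatrix ℝ) *ᵥ y)) (σ l)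
      = (J *ᵥ (((σ⁻¹).permMatrix ℝ) *ᵥ y)) (σ k) := by
    simp only [Matrix.mulVec, dotProduct]
    exact Finset.sum_congr rfl fun j _ => by rw [hJ (σ l) (σ k) j]
  rw [key, key, hc]
  have := mul_le_mul_of_nonneg_left hlt.le ha
  linarith
end

section
/- Let M ≥ 3, F ∈ ℝ^{M×N}, R ∈ ℝ^{N×M}, and A = FR. Suppose that for every composition m of M, every Variant I initial codeword ŷ_init compatible with m, and every permutation matrix P arising as a Variant I FPQ encoding, the linear reconstruction x̂ = R P^{−1} ŷ_init is consistent, i.e., the inequality D(m) P A P^{−1} ŷ_init ≥ 0 holds elementwise for every composition m, every Variant I initial codeword ŷ_init compatible with m, and every permutation matrix P. Then A must be of the form A = aI_M + J with a ≥ 0 and J a column-constant matrix. -/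
theorem aux_ones_index {M : ℕ} (k : Fin M) : ((Composition.ones M).index k : ℕ) = k := by
  have h := (Composition.ones M).embedding_comp_inv k
  have h4 : (Composition.ones M).embedding ((Composition.ones M).index k)
    ((Composition.ones M).invEmbedding k) = k := h
  have h5 : (Composition.ones M).invEmbedding k = ⟨0, by
      have := ((Composition.ones M).invEmbedding k).2
      omega⟩ := by
    apply Fin.ext
    have := ((Composition.ones M).invEmbedding k).2
    simp only [Composition.ones_blocksFun] at this
    simp only
    omega
  rw [h5] at h4
  have h6 := congrArg Fin.val h4
  rw [Composition.ones_embedding] at h6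
  exact h6

open Matrix in
theorem aux_step {M : ℕ} (A : Matrix (Fin M) (Fin M) ℝ)
    (h : ∀ (c : Composition M) (y : Fin M → ℝ), VarICodeword c y →
      ∀ σ : Equiv.Perm (Fin M),
        DescIneq c ((σ.permMatrix ℝ) *ᵥ (A *ᵥ (((σ⁻¹).permMatrix ℝ) *ᵥ y))))
    (y : Fin M → ℝ) (hy : Antitone y) (σ : Equiv.Perm (Fin M)) (p q : Fin M)
    (hpq : (p : ℕ) + 1 = q) :
    ∑ j, A (σ q) j * y (σ⁻¹ j) ≤ ∑ j, A (σ p) j * y (σ⁻¹ j) := by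
  have key : ∀ ε : ℝ, 0 < ε →
      ∑ j, A (σ q) j * (y (σ⁻¹ j) - ε * ((σ⁻¹ j : Fin M) : ℕ)) ≤
        ∑ j, A (σ p) j * (y (σ⁻¹ j) - ε * ((σ⁻¹ j : Fin M) : ℕ)) := by
    intro ε hε
    have := h (Composition.ones M) (fun m => y m - ε * (m : ℕ)) ?_ σ p q ?_
    · simpa [Matrix.permMatrix_mulVec, Matrix.mulVec, dotProduct] using this
    · constructor
      · intro k l hkl
        have : (k : ℕ) = l := by
          rw [← aux_ones_index k, ← aux_ones_index l, hkl]
        rw [Fin.ext this]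
      · intro k l hkl
        rw [aux_ones_index, aux_ones_index] at hkl
        have h1 : y l ≤ y k := hy (Fin.le_def.2 hkl.le)
        have h2 : ((k : ℕ) : ℝ) < (l : ℕ) := by exact_mod_cast hkl
        have := mul_lt_mul_of_pos_left h2 hε
        simp only
        linarith
    · rw [aux_ones_index, aux_ones_index]; exact hpq
  have hc : ∀ i : Fin M, Filter.Tendsto
      (fun ε : ℝ => ∑ j, A i j * (y (σ⁻¹ j) - ε * ((σ⁻¹ j : Fin M) : ℕ)))
      (nhdsWithin 0 (Set.Ioi 0)) (nhds (∑ j, A i j * y (σ⁻¹ j))) := by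
    intro i
    have : Continuous (fun ε : ℝ => ∑ j, A i j * (y (σ⁻¹ j) - ε * ((σ⁻¹ j : Fin M) : ℕ))) := by
      fun_prop
    have h2 := (this.tendsto 0).mono_left (nhdsWithin_le_nhds (s := Set.Ioi 0))
    simpa using h2
  exact le_of_tendsto_of_tendsto (hc _) (hc _)
    (Filter.eventually_of_mem self_mem_nhdsWithin fun ε hε => key ε hε)

theorem aux_perm2 {α : Type*} [DecidableEq α] (x y i j : α) (hxy : x ≠ y) (hij : i ≠ j) :
    ∃ σ : Equiv.Perm α, σ x = i ∧ σ y = j := by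
  refine ⟨Equiv.swap x i * Equiv.swap y ((Equiv.swap x i) j), ?_, ?_⟩
  · rw [Equiv.Perm.mul_apply, Equiv.swap_apply_of_ne_of_ne hxy, Equiv.swap_apply_left]
    intro h
    have := congrArg (Equiv.swap x i) h
    simp at this
    exact hij this
  · simp

theorem aux_perm3 {α : Type*} [DecidableEq α] (x y z i j k : α) (hxy : x ≠ y) (hxz : x ≠ z)
    (hyz : y ≠ z) (hij : i ≠ j) (hik : i ≠ k) (hjk : j ≠ k) :
    ∃ σ : Equiv.Perm α, σ x = i ∧ σ y = j ∧ σ z = k := by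
  obtain ⟨τ, h1, h2⟩ := aux_perm2 x y i j hxy hij
  refine ⟨τ * Equiv.swap z (τ⁻¹ k), ?_, ?_, ?_⟩
  · rw [Equiv.Perm.mul_apply, Equiv.swap_apply_of_ne_of_ne hxz, h1]
    rintro rfl
    simp at h1
    exact hik h1.symm
  · rw [Equiv.Perm.mul_apply, Equiv.swap_apply_of_ne_of_ne hyz, h2]
    rintro rfl
    simp at h2
    exact hjk h2.symm
  · simp

open Matrix in
/-- If `M ≥ 3` and the consistency inequality `D(m) P A P⁻¹ ŷ_init ≥ 0` holds for every
composition `m` of `M`, every Variant I initial codeword `ŷ_init` compatible with `m`, and every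
permutation matrix `P`, then `A = FR` must be of the form `aI_M + J` with `a ≥ 0` and `J`
column-constant. -/
theorem stmt4 {M N : ℕ} (hM : 3 ≤ M)
    (F : Matrix (Fin M) (Fin N) ℝ) (R : Matrix (Fin N) (Fin M) ℝ)
    (h : ∀ (c : Composition M) (y : Fin M → ℝ), VarICodeword c y →
      ∀ σ : Equiv.Perm (Fin M),
        DescIneq c ((σ.permMatrix ℝ) *ᵥ ((F * R) *ᵥ (((σ⁻¹).permMatrix ℝ) *ᵥ y)))) :
    ∃ (a : ℝ) (J : Matrix (Fin M) (Fin M) ℝ), 0 ≤ a ∧ ColConst J ∧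
      F * R = a • (1 : Matrix (Fin M) (Fin M) ℝ) + J := by
  generalize F * R = A at h ⊢
  have step := aux_step A h
  let x0 : Fin M := ⟨0, by omega⟩
  let x1 : Fin M := ⟨1, by omega⟩
  let x2 : Fin M := ⟨2, by omega⟩
  have h01 : x0 ≠ x1 := by simp [x0, x1]
  have h02 : x0 ≠ x2 := by simp [x0, x2]
  have h12 : x1 ≠ x2 := by simp [x1, x2]
  have hanti : Antitone (fun m : Fin M => if m = x0 then (1 : ℝ) else 0) := by
    intro a b hab
    by_cases hb : b = x0
    · have : a = x0 := by
        subst hb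
        apply Fin.ext
        have := Fin.le_def.1 hab
        simp only [x0] at this ⊢
        omega
      simp [hb, this]
    · simp only [hb, if_false]
      split_ifs <;> norm_num
  have e1 : ∀ (σ : Equiv.Perm (Fin M)) (i : Fin M),
      ∑ j, A i j * (if σ⁻¹ j = x0 then (1 : ℝ) else 0) = A i (σ x0) := by
    intro σ i
    have : ∀ j, (σ⁻¹ j = x0) ↔ (j = σ x0) := fun j => Equiv.Perm.inv_eq_iff_eq
    simp only [this]
    simp
  have hcol : ∀ i j k, k ≠ i → k ≠ j → A i k = A j k := by
    have : ∀ i j k, k ≠ i → k ≠ j → A j k ≤ A i k := by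
      intro i j k hi hj
      by_cases hij : i = j
      · rw [hij]
      obtain ⟨σ, s0, s1, s2⟩ := aux_perm3 x0 x1 x2 k i j h01 h02 h12 hi hj hij
      have := step _ hanti σ x1 x2 rfl
      rwa [e1, e1, s0, s1, s2] at this
    intro i j k hi hj
    exact le_antisymm (this j i k hj hi) (this i j k hi hj)
  have hdiag : ∀ i j, i ≠ j → A j i ≤ A i i := by
    intro i j hij
    obtain ⟨σ, s0, s1⟩ := aux_perm2 x0 x1 i j h01 hij
    have := step _ hanti σ x0 x1 rfl
    rwa [e1, e1, s0, s1] at this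
  have hrow : ∀ i j, ∑ k, A i k = ∑ k, A j k := by
    have : ∀ i j, i ≠ j → ∑ k, A j k ≤ ∑ k, A i k := by
      intro i j hij
      obtain ⟨σ, s0, s1⟩ := aux_perm2 x0 x1 i j h01 hij
      have := step (fun _ => 1) antitone_const σ x0 x1 rfl
      simpa [s0, s1] using this
    intro i j
    by_cases hij : i = j
    · rw [hij]
    exact le_antisymm (this j i (Ne.symm hij)) (this i j hij)
  -- a row index different from the given column
  let f : Fin M → Fin M := fun j => if j = x0 then x1 else x0
  have hf : ∀ j, j ≠ f j := by
    intro j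
    by_cases hj : j = x0
    · simp [f, hj, h01]
    · simp [f, hj]
  have hA : ∀ i j, A i j = (if i = j then A j j - A (f j) j else 0) + A (f j) j := by
    intro i j
    by_cases hij : i = j
    · subst hij; simp
    · simp only [hij, if_false, zero_add]
      exact hcol i (f j) j (Ne.symm hij) (hf j)
  have hrs : ∀ i, ∑ k, A i k = (A i i - A (f i) i) + ∑ k, A (f k) k := by
    intro i
    rw [Finset.sum_congr rfl (fun k _ => hA i k), Finset.sum_add_distrib]
    simp
  refine ⟨A x0 x0 - A (f x0) x0, Matrix.of fun _ j => A (f j) j, ?_, ?_, ?_⟩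
  · exact sub_nonneg.2 (hdiag _ _ (hf _))
  · intro i i' j; rfl
  · ext i j
    have e := hrow x0 j
    rw [hrs, hrs] at e
    rw [hA i j]
    simp only [Matrix.add_apply, Matrix.smul_apply, Matrix.one_apply, Matrix.of_apply, smul_eq_mul]
    split_ifs
    · linarith
    · simp
end

section
/- Let M = N and suppose A = FR = aI_M for some a ≥ 0, where F ∈ ℝ^{M×N} is a frame analysis operator and R ∈ ℝ^{N×M}. Then for every composition m of M, every Variant II initial codeword ŷ_init compatible with m, and every x ∈ ℝ^N with Variant II FPQ encoding (P,V), the linear reconstruction x̂ = R P^{−1} V^{−1} ŷ_init is consistent; that is, D̃(m) V P F x̂ ≥ 0 elementwise. -/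
/-- A Variant II initial codeword compatible with the composition `m`: constant on blocks,
strictly decreasing across blocks, with all values nonnegative (`μ_1 > ⋯ > μ_K ≥ 0`). -/
def VarIICodeword {M : ℕ} (c : Composition M) (y : Fin M → ℝ) : Prop :=
  (∀ k ℓ : Fin M, c.index k = c.index ℓ → y k = y ℓ) ∧
  (∀ k ℓ : Fin M, (c.index k : ℕ) < (c.index ℓ : ℕ) → y ℓ < y k) ∧
  (∀ k : Fin M, 0 ≤ y k)

/-- `D̃(m) z ≥ 0` elementwise: `D(m) z ≥ 0` together with nonnegativity of the entries of `z`
indexed by the second-to-last block `I_{K-1}` of the composition `m`. -/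
def VarIIIneq {M : ℕ} (c : Composition M) (z : Fin M → ℝ) : Prop :=
  DescIneq c z ∧ ∀ k : Fin M, (c.index k : ℕ) + 2 = c.length → 0 ≤ z k

open Matrix in
/-- If `M = N` and `A = FR = aI_M` with `a ≥ 0`, then for every composition `m` of `M`, every
Variant II initial codeword compatible with `m`, and every `x` with Variant II FPQ encoding
`(P, V)` — `V = diag(ε)` a sign-changing matrix equal to `+1` on the last block, `|VPFx|`
`m`-descending and the first `M - m_K` entries of `VPFx` nonnegative — the linear reconstruction
`x̂ = R P⁻¹ V⁻¹ ŷ_init` is consistent: `D̃(m) V P F x̂ ≥ 0` elementwise. -/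
theorem stmt5 {M N : ℕ} (hMN : M = N)
    (F : Matrix (Fin M) (Fin N) ℝ) (hF : F.rank = N) (R : Matrix (Fin N) (Fin M) ℝ)
    (a : ℝ) (ha : 0 ≤ a) (hA : F * R = a • (1 : Matrix (Fin M) (Fin M) ℝ))
    (c : Composition M) (y : Fin M → ℝ) (hy : VarIICodeword c y)
    (x : Fin N → ℝ) (σ : Equiv.Perm (Fin M)) (ε : Fin M → ℝ)
    (hsign : ∀ k, ε k = 1 ∨ ε k = -1)
    (hlast : ∀ k : Fin M, (c.index k : ℕ) + 1 = c.length → ε k = 1)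
    (henc1 : DescIneq c (fun k => |(Matrix.diagonal ε *ᵥ ((σ.permMatrix ℝ) *ᵥ (F *ᵥ x))) k|))
    (henc2 : ∀ k : Fin M, (c.index k : ℕ) + 1 < c.length →
      0 ≤ (Matrix.diagonal ε *ᵥ ((σ.permMatrix ℝ) *ᵥ (F *ᵥ x))) k) :
    VarIIIneq c (Matrix.diagonal ε *ᵥ ((σ.permMatrix ℝ) *ᵥ
      (F *ᵥ (R *ᵥ (((σ⁻¹).permMatrix ℝ) *ᵥ ((Matrix.diagonal ε)⁻¹ *ᵥ y)))))) := by
  have hdet : IsUnit (Matrix.diagonal ε).det := by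
    rw [Matrix.det_diagonal, isUnit_iff_ne_zero]
    refine Finset.prod_ne_zero_iff.mpr fun k _ => ?_
    rcases hsign k with h | h <;> rw [h] <;> norm_num
  have hperm : ∀ v : Fin M → ℝ, (σ.permMatrix ℝ) *ᵥ (((σ⁻¹).permMatrix ℝ) *ᵥ v) = v := by
    intro v
    ext k
    simp [Matrix.permMatrix_mulVec]
  have key : Matrix.diagonal ε *ᵥ ((σ.permMatrix ℝ) *ᵥ
      (F *ᵥ (R *ᵥ (((σ⁻¹).permMatrix ℝ) *ᵥ ((Matrix.diagonal ε)⁻¹ *ᵥ y))))) = a • y := by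
    rw [Matrix.mulVec_mulVec _ F R, hA, Matrix.smul_mulVec, Matrix.one_mulVec,
      Matrix.mulVec_smul, hperm, Matrix.mulVec_smul, Matrix.mulVec_mulVec,
      Matrix.mul_nonsing_inv _ hdet, Matrix.one_mulVec]
  rw [key]
  refine ⟨fun k l h => ?_, fun k _ => mul_nonneg ha (hy.2.2 k)⟩
  exact mul_le_mul_of_nonneg_left (hy.2.1 k l (by omega)).le ha
end

section
/- Let N ≥ 1 and M = N+1, and let Φ = {φ_k}_{k=1}^M be the real harmonic tight frame of M vectors in ℝ^N. Then for all 1 ≤ k < ℓ ≤ M, the inner product satisfies ⟨φ_k, φ_ℓ⟩ = (−1)^{k−ℓ+1}/N. -/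
lemma aux_cos_s13 (s a b : ℝ) : s * Real.cos a * (s * Real.cos b) + s * Real.sin a * (s * Real.sin b)
    = s * s * Real.cos (b - a) := by
  rw [Real.cos_sub]
  ring

lemma aux_even (t : ℝ) (n : ℕ) :
    Real.sin t * (2 * ∑ j : Fin n, Real.cos ((2 * (j : ℕ) + 1) * t)) = Real.sin ((n + n) * t) := by
  induction n with
  | zero => simp
  | succ n ih =>
    rw [Fin.sum_univ_castSucc, mul_add, mul_add]
    simp only [Fin.val_castSucc, Fin.val_last]
    rw [ih]
    push_cast
    have h1 : ((n : ℝ) + 1 + (n + 1)) * t = (2 * n + 1) * t + t := by ring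
    have h2 : ((n : ℝ) + n) * t = (2 * n + 1) * t - t := by ring
    rw [h1, h2, Real.sin_add, Real.sin_sub]
    ring

lemma aux_odd (t : ℝ) (n : ℕ) :
    Real.sin t * (1 + 2 * ∑ j : Fin n, Real.cos ((2 * ((j : ℕ) + 1)) * t))
      = Real.sin ((n + n + 1) * t) := by
  induction n with
  | zero => simp
  | succ n ih =>
    rw [Fin.sum_univ_castSucc, mul_add 2, ← add_assoc, mul_add]
    simp only [Fin.val_castSucc, Fin.val_last]
    rw [ih]
    push_cast
    have h1 : ((n : ℝ) + 1 + (n + 1) + 1) * t = (2 * (n + 1)) * t + t := by ring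
    have h2 : ((n : ℝ) + n + 1) * t = (2 * (n + 1)) * t - t := by ring
    rw [h1, h2, Real.sin_add, Real.sin_sub]
    ring

lemma aux_sin_s13 (N d : ℕ) :
    Real.sin ((N : ℝ) * (d * Real.pi / (N + 1 : ℝ)))
      = (-1) ^ (d + 1) * Real.sin (d * Real.pi / (N + 1 : ℝ)) := by
  have h : (N : ℝ) * (d * Real.pi / (N + 1 : ℝ)) = d * Real.pi - d * Real.pi / (N + 1 : ℝ) := by
    have : (N : ℝ) + 1 ≠ 0 := by positivity
    field_simp
    ring
  rw [h, Real.sin_sub, Real.sin_nat_mul_pi, Real.cos_nat_mul_pi]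
  ring

lemma aux_pos (N d : ℕ) (h0 : 0 < d) (h1 : d < N + 1) :
    Real.sin (d * Real.pi / (N + 1 : ℝ)) ≠ 0 := by
  apply ne_of_gt
  have hp := Real.pi_pos
  have hd : (0 : ℝ) < d := by exact_mod_cast h0
  have hd1 : (d : ℝ) < N + 1 := by exact_mod_cast h1
  apply Real.sin_pos_of_pos_of_lt_pi
  · positivity
  · rw [div_lt_iff₀ (by positivity)]
    nlinarith

/-- For `M = N + 1`, the real harmonic tight frame `Φ = {φ_k}` satisfies
`⟨φ_k, φ_ℓ⟩ = (-1)^{k-ℓ+1} / N` for all `1 ≤ k < ℓ ≤ M` (with `htf N M k = φ_{k+1}`;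
since `(-1)^{k-ℓ+1} = (-1)^{ℓ-k+1}`, the exponent is written with the positive difference). -/
theorem stmt13 {N : ℕ} (hN : 1 ≤ N) (M : ℕ) (hM : M = N + 1)
    (k ℓ : Fin M) (hkl : k < ℓ) :
    ∑ i : Fin N, htf N M k i * htf N M ℓ i =
      (-1 : ℝ) ^ ((ℓ : ℕ) - (k : ℕ) + 1) / N := by
  subst hM
  obtain ⟨k, hk⟩ := k
  obtain ⟨l, hl⟩ := ℓ
  have hkl' : k < l := hkl
  obtain ⟨d, rfl⟩ := Nat.exists_eq_add_of_lt hkl'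
  have hd : k + d + 1 - k = d + 1 := by omega
  have hs := aux_pos N (d + 1) (by omega) (by omega)
  have hsin := aux_sin_s13 N (d + 1)
  have hNR : (0 : ℝ) < N := by exact_mod_cast hN
  have hsq : Real.sqrt (2 / N) * Real.sqrt (2 / N) = 2 / N :=
    Real.mul_self_sqrt (by positivity)
  simp only [hd]
  rcases Nat.even_or_odd' N with ⟨n, hn | hn⟩
  · obtain rfl : N = n + n := by omega
    rw [Fin.sum_univ_add, ← Finset.sum_add_distrib]
    have key := aux_even (((d + 1 : ℕ) : ℝ) * Real.pi / (((n + n : ℕ) : ℝ) + 1)) n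
    have hc : ((n : ℝ) + n) = ((n + n : ℕ) : ℝ) := by push_cast; ring
    rw [hc, hsin, mul_comm ((-1 : ℝ) ^ _)] at key
    have key2 := mul_left_cancel₀ hs key
    rw [← key2, mul_div_right_comm, Finset.mul_sum]
    apply Finset.sum_congr rfl
    intro j _
    have e1 : (n + n) % 2 = 0 := by omega
    have e2 : (n + n) / 2 = n := by omega
    simp only [htf, e1, e2, Fin.val_castAdd, Fin.val_natAdd, j.2, if_true,
      add_tsub_cancel_left, if_neg (show ¬ (n + (j : ℕ) < n) by omega)]
    rw [aux_cos_s13, hsq]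
    congr 2
    push_cast
    ring
  · obtain rfl : N = n + n + 1 := by omega
    rw [Fin.sum_univ_succ, Fin.sum_univ_add, ← Finset.sum_add_distrib]
    have key := aux_odd (((d + 1 : ℕ) : ℝ) * Real.pi / (((n + n + 1 : ℕ) : ℝ) + 1)) n
    have hc : ((n : ℝ) + n + 1) = ((n + n + 1 : ℕ) : ℝ) := by push_cast; ring
    rw [hc, hsin, mul_comm ((-1 : ℝ) ^ _)] at key
    have key2 := mul_left_cancel₀ hs key
    rw [← key2, add_div, mul_div_right_comm, Finset.mul_sum]
    have e1 : ¬ ((n + n + 1) % 2 = 0) := by omega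
    have e2 : (n + n + 1 - 1) / 2 = n := by omega
    congr 1
    · simp only [htf, e1, if_false, Fin.val_zero, if_true]
      rw [mul_mul_mul_comm, hsq, div_mul_div_comm, Real.mul_self_sqrt (by norm_num)]
      ring
    · apply Finset.sum_congr rfl
      intro j _
      simp only [htf, e1, e2, Fin.val_succ, Fin.val_castAdd, Fin.val_natAdd, if_false,
        if_pos (show (j : ℕ) + 1 ≤ n by omega), if_neg (show ¬ (n + (j : ℕ) + 1 ≤ n) by omega),
        if_neg (show ¬ ((j : ℕ) + 1 = 0) by omega), if_neg (show ¬ (n + (j : ℕ) + 1 = 0) by omega),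
        show n + (j : ℕ) + 1 - n = j + 1 by omega]
      rw [aux_cos_s13, hsq]
      congr 2
      push_cast
      ring
end

section
/- Let M ≥ 3 and let A ∈ ℝ^{M×M} have entries a_{k,j}. If a_{k,1} ≠ a_{ℓ,1} for some indices 1 < k < ℓ ≤ M, then there exist a permutation matrix O, a composition m of M, and a Variant II initial codeword ŷ_init compatible with m such that the inequality D(m) O A O^{−1} ŷ_init ≥ 0 (elementwise) fails. -/
theorem aux_index {M : ℕ} (i : Fin M) : (((Composition.ones M).index i : ℕ)) = i := by
  have h1 := (Composition.ones M).sizeUpTo_index_le i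
  have h2 := (Composition.ones M).lt_sizeUpTo_index_succ i
  have h3 := ((Composition.ones M).index i).2
  rw [Composition.ones_sizeUpTo] at h1 h2
  have h4 := Composition.ones_length M
  simp only [Fin.val_succ] at h2
  omega

theorem aux_perm {M : ℕ} (a b c p q : Fin M) (hab : a ≠ b) (hac : a ≠ c) (hbc : b ≠ c)
    (hap : a ≠ p) (haq : a ≠ q) (hpq : p ≠ q) :
    ∃ σ : Equiv.Perm (Fin M), σ a = a ∧ σ b = p ∧ σ c = q := by
  have h0 : Equiv.swap b p a = a := Equiv.swap_apply_of_ne_of_ne hab hap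
  have h1 : Equiv.swap b p b = p := Equiv.swap_apply_left _ _
  have e0 : a ≠ Equiv.swap b p c := by
    intro h; rw [← h0] at h; exact hac ((Equiv.swap b p).injective (by rwa [h0] at h ⊢))
  have e1 : p ≠ Equiv.swap b p c := by
    intro h; exact hbc ((Equiv.swap b p).injective (by rw [h1]; exact h))
  refine ⟨Equiv.swap (Equiv.swap b p c) q * Equiv.swap b p, ?_, ?_, ?_⟩
  · rw [Equiv.Perm.mul_apply, h0, Equiv.swap_apply_of_ne_of_ne e0 haq]
  · rw [Equiv.Perm.mul_apply, h1, Equiv.swap_apply_of_ne_of_ne e1 hpq]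
  · rw [Equiv.Perm.mul_apply, Equiv.swap_apply_left]

open Matrix in
theorem aux_mul {M : ℕ} (A : Matrix (Fin M) (Fin M) ℝ) (σ : Equiv.Perm (Fin M))
    (y : Fin M → ℝ) (i : Fin M) :
    (((σ.permMatrix ℝ) * A * ((σ⁻¹).permMatrix ℝ)) *ᵥ y) i
      = ∑ j, A (σ i) j * y (σ⁻¹ j) := by
  rw [← Matrix.mulVec_mulVec, ← Matrix.mulVec_mulVec, Matrix.permMatrix_mulVec,
    Matrix.permMatrix_mulVec]
  rfl

open Matrix in
theorem aux_main {M : ℕ} (hM : 3 ≤ M) (A : Matrix (Fin M) (Fin M) ℝ)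
    (p q : Fin M) (hp : (⟨0, by omega⟩ : Fin M) ≠ p) (hq : (⟨0, by omega⟩ : Fin M) ≠ q)
    (hlt : A p ⟨0, by omega⟩ < A q ⟨0, by omega⟩) :
    ∃ (σ : Equiv.Perm (Fin M)) (c : Composition M) (y : Fin M → ℝ),
      VarIICodeword c y ∧
      ¬ DescIneq c (((σ.permMatrix ℝ) * A * ((σ⁻¹).permMatrix ℝ)) *ᵥ y) := by
  have hpq : p ≠ q := by rintro rfl; exact lt_irrefl _ hlt
  set z : Fin M := ⟨0, by omega⟩ with hz
  obtain ⟨σ, s0, s1, s2⟩ := aux_perm z ⟨1, by omega⟩ ⟨2, by omega⟩ p q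
    (by simp [hz]) (by simp [hz]) (by simp) hp hq hpq
  have s0' : σ⁻¹ z = z := by rw [Equiv.Perm.inv_eq_iff_eq, s0]
  let b : Fin M → ℝ := fun i => (M : ℝ) - (i : ℕ)
  let C : ℝ := ∑ j ∈ Finset.univ.erase z, (A p j - A q j) * b (σ⁻¹ j)
  let d : ℝ := A q z - A p z
  have hd : 0 < d := sub_pos.2 hlt
  let T : ℝ := M + 1 + |C| / d
  have hT : (M : ℝ) + 1 ≤ T := le_add_of_nonneg_right (by positivity)
  have hTd : C < d * T := by
    have h1 : d * T = d * (M + 1) + |C| := by simp only [T]; field_simp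
    have h2 : 0 < d * (M + 1) := by positivity
    linarith [le_abs_self C]
  refine ⟨σ, Composition.ones M, fun i => if i = z then T else b i, ⟨?_, ?_, ?_⟩, ?_⟩
  · intro i j h
    have h' := congrArg Fin.val h
    rw [aux_index, aux_index] at h'
    rw [Fin.ext h']
  · intro i j h
    rw [aux_index, aux_index] at h
    have hj : j ≠ z := by rintro rfl; simp [hz] at h
    have hh : ((i : ℕ) : ℝ) < (j : ℕ) := by exact_mod_cast h
    have hi0 : (0 : ℝ) ≤ (i : ℕ) := Nat.cast_nonneg _
    simp only [hj, if_false, b]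
    split_ifs <;> linarith
  · intro i
    have hi : ((i : ℕ) : ℝ) < M := by exact_mod_cast i.2
    have hi0 : (0 : ℝ) ≤ (i : ℕ) := Nat.cast_nonneg _
    simp only [b]
    split_ifs <;> linarith
  · intro h
    have h := h ⟨1, by omega⟩ ⟨2, by omega⟩ (by rw [aux_index, aux_index])
    rw [aux_mul, aux_mul, s1, s2, ← sub_nonneg, ← Finset.sum_sub_distrib,
      ← Finset.add_sum_erase _ _ (Finset.mem_univ z)] at h
    have hC : ∑ j ∈ Finset.univ.erase z, (A p j * (if σ⁻¹ j = z then T else b (σ⁻¹ j))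
        - A q j * (if σ⁻¹ j = z then T else b (σ⁻¹ j))) = C := by
      refine Finset.sum_congr rfl fun j hj => ?_
      have : σ⁻¹ j ≠ z := by
        intro e; rw [Equiv.Perm.inv_eq_iff_eq, s0] at e
        exact Finset.ne_of_mem_erase hj e
      rw [if_neg this]; ring
    rw [hC, s0', if_pos rfl] at h
    simp only [d] at hTd
    linarith

open Matrix in
/-- If `M ≥ 3` and two entries of the first column of `A` below the first row differ
(`a_{k,1} ≠ a_{ℓ,1}` for some `1 < k < ℓ`), then there exist a permutation matrix `O`,
a composition `m` of `M` and a Variant II initial codeword `ŷ_init` compatible with `m` such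
that the inequality `D(m) O A O⁻¹ ŷ_init ≥ 0` fails. -/
theorem stmt15 {M : ℕ} (hM : 3 ≤ M) (A : Matrix (Fin M) (Fin M) ℝ)
    (k ℓ : Fin M) (hk : 1 ≤ (k : ℕ)) (hkl : k < ℓ)
    (hne : A k ⟨0, by omega⟩ ≠ A ℓ ⟨0, by omega⟩) :
    ∃ (σ : Equiv.Perm (Fin M)) (c : Composition M) (y : Fin M → ℝ),
      VarIICodeword c y ∧
      ¬ DescIneq c (((σ.permMatrix ℝ) * A * ((σ⁻¹).permMatrix ℝ)) *ᵥ y) := by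
  have h0 : (⟨0, by omega⟩ : Fin M) ≠ k := by
    intro h; rw [← h] at hk; simp at hk
  have h1 : (⟨0, by omega⟩ : Fin M) ≠ ℓ := by
    intro h; rw [← h] at hkl; exact absurd hkl (by simp [Fin.lt_def])
  rcases lt_or_gt_of_ne hne with h | h
  · exact aux_main hM A k ℓ h0 h1 h
  · exact aux_main hM A ℓ k h1 h0 h
end
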